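/- Let ψ ∈ C²_b(ℝ³), let v, v_* ∈ ℝ³ with v ≠ v_*, set n = (v−v_*)/|v−v_*|, let θ ∈ [0, π], and let e₁, e₂ be any two orthonormal vectors of ℝ³ perpendicular to n. For φ ∈ [0, 2π] set σ(φ) = cos φ · e₁ + sin φ · e₂, v'(φ) = sin²θ·v + cos²θ·v_* − |v−v_*| cos θ sin θ · σ(φ), and v'_*(φ) = cos²θ·v + sin²θ·v_* + |v−v_*| cos θ sin θ · σ(φ). Then |∫₀^{2π} (ψ(v'(φ)) + ψ(v'_*(φ)) − ψ(v) − ψ(v_*)) dφ| ≤ 8π · C*_ψ(v, v_*) · |v − v_*|² · sin²θ cos²θ. -/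

import Mathlib

/-!
The collision `(v, w) ↦ (v', v'_*)` preserves the kinetic energy, so replacing `ψ` by
`f = ψ - l |u|² / 2` changes nothing in the integrand; `l = 0` leads to the bound by `‖D²ψ‖_∞` and
`l = Tr D²ψ(0) / 3` to the one by `‖D²ψ‖_*`. By energy conservation all points involved lie in the
ball of radius `√(|v|² + |v_*|²)`, on which `|D²f| ≤ M`.

Write `v' = a - ρ σ` and `v'_* = b + ρ σ` with `a`, `b` on the segment from `v_*` to `v` and
`ρ = |v - v_*| cos θ sin θ`. Everything is now a second difference of `f`. Pairing `σ` with `-σ`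
turns the integrals of `f (a - ρ σ) - f a` and `f (b + ρ σ) - f b` into integrals of symmetric
second differences, each at most `π M ρ²`; and `f a + f b - f v - f v_*` is a second difference with
steps `sin² θ (v - v_*)` and `cos² θ (v - v_*)`, hence at most `M ρ²`. The total is `4π M ρ²`.
-/


open MeasureTheory Real Filter
open scoped RealInnerProductSpace Topology

noncomputable section

abbrev E3 := EuclideanSpace ℝ (Fin 3)

/-- The Hessian of `ψ` at `u` as a `3 × 3` matrix. -/
noncomputable def hessMat (ψ : E3 → ℝ) (u : E3) : Matrix (Fin 3) (Fin 3) ℝ :=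
  Matrix.of fun i j =>
    iteratedFDeriv ℝ 2 ψ u ![EuclideanSpace.single i (1 : ℝ), EuclideanSpace.single j (1 : ℝ)]

/-- Frobenius norm of a `3 × 3` real matrix. -/
noncomputable def frobNorm (A : Matrix (Fin 3) (Fin 3) ℝ) : ℝ :=
  Real.sqrt (∑ i, ∑ j, (A i j) ^ 2)

/-- `‖D²ψ‖_∞ = sup_u |D²ψ(u)|`. -/
noncomputable def hessSupNorm (ψ : E3 → ℝ) : ℝ :=
  ⨆ u : E3, frobNorm (hessMat ψ u)

/-- `‖D²ψ‖_*`. -/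
noncomputable def hessStarNorm (ψ : E3 → ℝ) : ℝ :=
  ⨆ p : E3 × E3,
    (1 + ‖p.1‖ ^ 2 + ‖p.2‖ ^ 2) ^ (-(1 / 4 : ℝ)) *
      ⨆ u : {u : E3 // ‖u‖ ≤ Real.sqrt (‖p.1‖ ^ 2 + ‖p.2‖ ^ 2)},
        frobNorm (hessMat ψ u -
          ((1 / 3) * Matrix.trace (hessMat ψ 0)) • (1 : Matrix (Fin 3) (Fin 3) ℝ))

/-- `C*_ψ(v,v_*) = min{‖D²ψ‖_∞, ‖D²ψ‖_* (1+|v|²+|v_*|²)^{1/4}}`. -/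
noncomputable def Cstar (ψ : E3 → ℝ) (v w : E3) : ℝ :=
  min (hessSupNorm ψ) (hessStarNorm ψ * (1 + ‖v‖ ^ 2 + ‖w‖ ^ 2) ^ ((1 / 4 : ℝ)))

section SecondDifference

variable {E F : Type*} [NormedAddCommGroup E] [NormedSpace ℝ E] [NormedAddCommGroup F]
  [NormedSpace ℝ F] {s : Set E} {f : E → F} {M : ℝ}

/-- `f` is twice differentiable within `s`, with second derivative of operator norm at most `M`. The
derivatives are existentially quantified because they need not be unique within a general `s`. -/
def HasHessianBoundOn (f : E → F) (s : Set E) (M : ℝ) : Prop :=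
  ∃ (f' : E → E →L[ℝ] F) (f'' : E → E →L[ℝ] E →L[ℝ] F), ∀ u ∈ s,
    HasFDerivWithinAt f (f' u) s u ∧ HasFDerivWithinAt f' (f'' u) s u ∧ ‖f'' u‖ ≤ M

lemma HasHessianBoundOn.continuousOn (hf : HasHessianBoundOn f s M) : ContinuousOn f s := by
  obtain ⟨f', f'', hf⟩ := hf
  exact fun u hu => (hf u hu).1.continuousWithinAt

lemma norm_second_difference_le (hs : Convex ℝ s) (hf : HasHessianBoundOn f s M) {x p q : E}
    (hx : x ∈ s) (hp : x + p ∈ s) (hq : x + q ∈ s) (hpq : x + p + q ∈ s) :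
    ‖f (x + p + q) - f (x + p) - (f (x + q) - f x)‖ ≤ M * ‖p‖ * ‖q‖ := by
  obtain ⟨f', f'', hf⟩ := hf
  have hderiv : ∀ u ∈ s ∩ (· + q) ⁻¹' s, HasFDerivWithinAt (fun u => f (u + q) - f u)
      (f' (u + q) - f' u) (s ∩ (· + q) ⁻¹' s) u := fun u hu =>
    ((hf _ hu.2).1.comp u ((hasFDerivWithinAt_id u _).add_const q) fun _ h => h.2).sub
      ((hf u hu.1).1.mono Set.inter_subset_left)
  have hbound : ∀ u ∈ s ∩ (· + q) ⁻¹' s, ‖f' (u + q) - f' u‖ ≤ M * ‖q‖ := fun u hu => by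
    simpa only [add_sub_cancel_left] using
      hs.norm_image_sub_le_of_norm_hasFDerivWithin_le (fun z hz => (hf z hz).2.1)
        (fun z hz => (hf z hz).2.2) hu.1 hu.2
  simpa only [add_sub_cancel_left, mul_right_comm M ‖q‖] using
    (hs.inter (hs.translate_preimage_left q)).norm_image_sub_le_of_norm_hasFDerivWithin_le
      hderiv hbound ⟨hx, hq⟩ ⟨hp, hpq⟩

lemma norm_symmetric_difference_le (hs : Convex ℝ s) (hf : HasHessianBoundOn f s M) {x y : E}
    (hadd : x + y ∈ s) (hsub : x - y ∈ s) :
    ‖(f (x + y) - f x) + (f (x - y) - f x)‖ ≤ M * ‖y‖ ^ 2 := by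
  have hx : x ∈ s := hs.segment_subset hsub hadd (mem_segment_sub_add x y)
  have h := norm_second_difference_le hs hf (x := x - y) (p := y) (q := y) hsub
    (by rwa [sub_add_cancel]) (by rwa [sub_add_cancel]) (by rwa [sub_add_cancel])
  rw [sub_add_cancel] at h
  calc ‖(f (x + y) - f x) + (f (x - y) - f x)‖
      = ‖f (x + y) - f x - (f x - f (x - y))‖ := by congr 1; abel
    _ ≤ M * ‖y‖ * ‖y‖ := h
    _ = M * ‖y‖ ^ 2 := by ring

lemma norm_convexCombination_difference_le (hs : Convex ℝ s) (hf : HasHessianBoundOn f s M)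
    {v w : E} (hv : v ∈ s) (hw : w ∈ s) {a b : ℝ} (ha : 0 ≤ a) (hb : 0 ≤ b) (hab : a + b = 1) :
    ‖f (a • v + b • w) + f (b • v + a • w) - f v - f w‖ ≤ M * (a * b * ‖v - w‖ ^ 2) := by
  obtain rfl : b = 1 - a := by linarith
  have hxp : w + a • (v - w) = a • v + (1 - a) • w := by module
  have hxq : w + (1 - a) • (v - w) = (1 - a) • v + a • w := by module
  have hxpq : w + a • (v - w) + (1 - a) • (v - w) = v := by module
  have hxp_mem : a • v + (1 - a) • w ∈ s := hs hv hw ha hb hab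
  have hxq_mem : (1 - a) • v + a • w ∈ s := hs hv hw hb ha (by linarith)
  have h := norm_second_difference_le hs hf (x := w) (p := a • (v - w))
    (q := (1 - a) • (v - w)) hw (by rwa [hxp]) (by rwa [hxq]) (by rwa [hxpq])
  rw [hxpq, hxp, hxq, norm_smul_of_nonneg ha, norm_smul_of_nonneg hb] at h
  calc ‖f (a • v + (1 - a) • w) + f ((1 - a) • v + a • w) - f v - f w‖
      = ‖f v - f (a • v + (1 - a) • w) - (f ((1 - a) • v + a • w) - f w)‖ := by
        rw [← norm_neg]; congr 1; abel
    _ ≤ M * (a * ‖v - w‖) * ((1 - a) * ‖v - w‖) := h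
    _ = M * (a * (1 - a) * ‖v - w‖ ^ 2) := by ring

end SecondDifference

/-- The parametrization `σ(φ) = cos φ e₁ + sin φ e₂` of the great circle through the vectors `e₁`
and `e₂`, which are meant to be orthonormal. -/
def greatCircle {E : Type*} [AddCommGroup E] [Module ℝ E] (e₁ e₂ : E) (φ : ℝ) : E :=
  cos φ • e₁ + sin φ • e₂

lemma greatCircle_add_pi {E : Type*} [AddCommGroup E] [Module ℝ E] (e₁ e₂ : E) (φ : ℝ) :
    greatCircle e₁ e₂ (φ + π) = -greatCircle e₁ e₂ φ := by
  simp only [greatCircle, cos_add_pi, sin_add_pi]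
  module

lemma greatCircle_periodic {E : Type*} [AddCommGroup E] [Module ℝ E] (e₁ e₂ : E) :
    Function.Periodic (greatCircle e₁ e₂) (2 * π) := fun φ => by
  simp only [greatCircle, cos_add_two_pi, sin_add_two_pi]

lemma integral_comp_neg_greatCircle {E F : Type*} [AddCommGroup E] [Module ℝ E]
    [NormedAddCommGroup F] [NormedSpace ℝ F] (h : E → F) (e₁ e₂ : E) :
    ∫ φ in (0 : ℝ)..2 * π, h (-greatCircle e₁ e₂ φ) =
      ∫ φ in (0 : ℝ)..2 * π, h (greatCircle e₁ e₂ φ) := by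
  simp only [← greatCircle_add_pi]
  rw [intervalIntegral.integral_comp_add_right fun φ => h (greatCircle e₁ e₂ φ), zero_add,
    add_comm (2 * π)]
  simpa only [Function.comp_apply, zero_add] using
    ((greatCircle_periodic e₁ e₂).comp h).intervalIntegral_add_eq π 0

@[fun_prop]
lemma continuous_greatCircle {E : Type*} [NormedAddCommGroup E] [NormedSpace ℝ E] {e₁ e₂ : E} :
    Continuous (greatCircle e₁ e₂) := by
  unfold greatCircle
  fun_prop

lemma intervalIntegrable_greatCircle_sub {E F : Type*} [NormedAddCommGroup E] [NormedSpace ℝ E]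
    [NormedAddCommGroup F] {s : Set E} {f : E → F} (hf : ContinuousOn f s) {e₁ e₂ x : E} {r : ℝ}
    (hx : ∀ φ, x + r • greatCircle e₁ e₂ φ ∈ s) (α β : ℝ) :
    IntervalIntegrable (fun φ => f (x + r • greatCircle e₁ e₂ φ) - f x) volume α β :=
  ((hf.comp_continuous (by fun_prop) hx).sub continuous_const).intervalIntegrable α β

section Collision

variable {E F : Type*} [NormedAddCommGroup E] [NormedSpace ℝ E] [NormedAddCommGroup F]
  [NormedSpace ℝ F] {s : Set E} {f : E → F} {M : ℝ} {e₁ e₂ : E}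

lemma norm_integral_greatCircle_sub_le (hs : Convex ℝ s) (hf : HasHessianBoundOn f s M)
    (he : ∀ φ, ‖greatCircle e₁ e₂ φ‖ = 1) {x : E} {r : ℝ}
    (hx : ∀ φ, x + r • greatCircle e₁ e₂ φ ∈ s) :
    ‖∫ φ in (0 : ℝ)..2 * π, (f (x + r • greatCircle e₁ e₂ φ) - f x)‖ ≤ π * M * r ^ 2 := by
  set I := ∫ φ in (0 : ℝ)..2 * π, (f (x + r • greatCircle e₁ e₂ φ) - f x)
  have hx_neg : ∀ φ, x + (-r) • greatCircle e₁ e₂ φ ∈ s := fun φ => by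
    simpa only [greatCircle_add_pi, smul_neg, neg_smul] using hx (φ + π)
  have hI_neg : ∫ φ in (0 : ℝ)..2 * π, (f (x + (-r) • greatCircle e₁ e₂ φ) - f x) = I := by
    simpa only [smul_neg, neg_smul] using
      integral_comp_neg_greatCircle (fun y => f (x + r • y) - f x) e₁ e₂
  have hsymm : (2 : ℝ) • I = ∫ φ in (0 : ℝ)..2 * π, ((f (x + r • greatCircle e₁ e₂ φ) - f x) +
      (f (x + (-r) • greatCircle e₁ e₂ φ) - f x)) := by
    rw [intervalIntegral.integral_add (intervalIntegrable_greatCircle_sub hf.continuousOn hx _ _)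
      (intervalIntegrable_greatCircle_sub hf.continuousOn hx_neg _ _), hI_neg, two_smul]
  have hbound : ‖(2 : ℝ) • I‖ ≤ M * r ^ 2 * |2 * π - 0| := by
    rw [hsymm]
    refine intervalIntegral.norm_integral_le_of_norm_le_const fun φ _ => ?_
    have hsub := hx_neg φ
    rw [neg_smul, ← sub_eq_add_neg] at hsub ⊢
    simpa only [norm_smul, he, mul_one, norm_eq_abs, sq_abs] using
      norm_symmetric_difference_le hs hf (hx φ) hsub
  rw [norm_smul, Real.norm_two, sub_zero, abs_of_pos two_pi_pos] at hbound
  linarith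

/-- The post-collisional velocity `v'` of a particle of velocity `v` that collides with one of
velocity `w`, where `θ` is the scattering parameter and `σ` is meant to be a unit vector orthogonal
to `v - w`. -/
def postVel (v w : E) (θ : ℝ) (σ : E) : E :=
  sin θ ^ 2 • v + cos θ ^ 2 • w - (‖v - w‖ * cos θ * sin θ) • σ

/-- The post-collisional velocity `v'_*` of the second particle; see `postVel`. -/
def postVelStar (v w : E) (θ : ℝ) (σ : E) : E :=
  cos θ ^ 2 • v + sin θ ^ 2 • w + (‖v - w‖ * cos θ * sin θ) • σ

lemma norm_integral_collision_le (hs : Convex ℝ s) (hf : HasHessianBoundOn f s M)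
    (he : ∀ φ, ‖greatCircle e₁ e₂ φ‖ = 1) {v w : E} {θ : ℝ} (hv : v ∈ s) (hw : w ∈ s)
    (hv' : ∀ φ, postVel v w θ (greatCircle e₁ e₂ φ) ∈ s)
    (hw' : ∀ φ, postVelStar v w θ (greatCircle e₁ e₂ φ) ∈ s) :
    ‖∫ φ in (0 : ℝ)..2 * π, (f (postVel v w θ (greatCircle e₁ e₂ φ)) +
        f (postVelStar v w θ (greatCircle e₁ e₂ φ)) - f v - f w)‖ ≤
      4 * π * M * ‖v - w‖ ^ 2 * sin θ ^ 2 * cos θ ^ 2 := by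
  set ρ := ‖v - w‖ * cos θ * sin θ with hρ
  set a := sin θ ^ 2 • v + cos θ ^ 2 • w
  set b := cos θ ^ 2 • v + sin θ ^ 2 • w
  set σ := greatCircle e₁ e₂
  have hpost : ∀ φ, postVel v w θ (σ φ) = a + (-ρ) • σ φ := fun φ => by
    rw [neg_smul, ← sub_eq_add_neg, postVel]
  have hpost_star : ∀ φ, postVelStar v w θ (σ φ) = b + ρ • σ φ := fun φ => rfl
  simp only [hpost, hpost_star] at hv' hw' ⊢
  have hline : ‖f a + f b - f v - f w‖ ≤ M * ρ ^ 2 := by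
    convert norm_convexCombination_difference_le hs hf hv hw (sq_nonneg (sin θ))
      (sq_nonneg (cos θ)) (sin_sq_add_cos_sq θ) using 2
    rw [hρ]; ring
  have hsplit : ∫ φ in (0 : ℝ)..2 * π, (f (a + (-ρ) • σ φ) + f (b + ρ • σ φ) - f v - f w) =
      (∫ φ in (0 : ℝ)..2 * π, (f (a + (-ρ) • σ φ) - f a)) +
        (∫ φ in (0 : ℝ)..2 * π, (f (b + ρ • σ φ) - f b)) +
        ∫ _φ in (0 : ℝ)..2 * π, (f a + f b - f v - f w) := by
    have hint_a := intervalIntegrable_greatCircle_sub hf.continuousOn hv' 0 (2 * π)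
    have hint_b := intervalIntegrable_greatCircle_sub hf.continuousOn hw' 0 (2 * π)
    rw [← intervalIntegral.integral_add hint_a hint_b, ← intervalIntegral.integral_add
      (hint_a.add hint_b) intervalIntegrable_const]
    congr 1 with φ
    abel
  have hconst := intervalIntegral.norm_integral_le_of_norm_le_const (a := 0) (b := 2 * π)
    (fun _ _ => hline)
  rw [sub_zero, abs_of_pos two_pi_pos] at hconst
  calc _ ≤ π * M * (-ρ) ^ 2 + π * M * ρ ^ 2 + M * ρ ^ 2 * (2 * π) := by
        rw [hsplit]
        exact norm_add₃_le.trans (add_le_add_three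
          (norm_integral_greatCircle_sub_le hs hf he hv')
          (norm_integral_greatCircle_sub_le hs hf he hw') hconst)
    _ = 4 * π * M * ‖v - w‖ ^ 2 * sin θ ^ 2 * cos θ ^ 2 := by rw [hρ]; ring

end Collision

section InnerProductSpace

variable {E : Type*} [NormedAddCommGroup E] [InnerProductSpace ℝ E] {v w e₁ e₂ : E}

lemma norm_greatCircle (he₁ : ‖e₁‖ = 1) (he₂ : ‖e₂‖ = 1) (he₁₂ : ⟪e₁, e₂⟫ = 0) (φ : ℝ) :
    ‖greatCircle e₁ e₂ φ‖ = 1 := by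
  rw [← sq_eq_sq₀ (norm_nonneg _) zero_le_one, greatCircle, norm_add_sq_real, norm_smul, norm_smul,
    inner_smul_left, inner_smul_right, he₁₂, he₁, he₂]
  simp

lemma inner_greatCircle_eq_zero {d : E} (hd₁ : ⟪d, e₁⟫ = 0) (hd₂ : ⟪d, e₂⟫ = 0) (φ : ℝ) :
    ⟪d, greatCircle e₁ e₂ φ⟫ = 0 := by
  simp [greatCircle, inner_add_right, inner_smul_right, hd₁, hd₂]

lemma postVel_add_postVelStar (v w : E) (θ : ℝ) (σ : E) :
    postVel v w θ σ + postVelStar v w θ σ = v + w := by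
  calc postVel v w θ σ + postVelStar v w θ σ = (sin θ ^ 2 + cos θ ^ 2) • (v + w) := by
        simp only [postVel, postVelStar]; module
    _ = v + w := by rw [sin_sq_add_cos_sq, one_smul]

lemma norm_postVel_sub_postVelStar_sq {σ : E} (hσ : ‖σ‖ = 1) (horth : ⟪v - w, σ⟫ = 0) (θ : ℝ) :
    ‖postVel v w θ σ - postVelStar v w θ σ‖ ^ 2 = ‖v - w‖ ^ 2 := by
  have hsub : postVel v w θ σ - postVelStar v w θ σ =
      (sin θ ^ 2 - cos θ ^ 2) • (v - w) - (2 * (‖v - w‖ * cos θ * sin θ)) • σ := by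
    simp only [postVel, postVelStar]; module
  rw [hsub, norm_sub_sq_real, inner_smul_left, inner_smul_right, horth, norm_smul, norm_smul, hσ,
    mul_pow, mul_pow, norm_eq_abs, norm_eq_abs, sq_abs, sq_abs]
  linear_combination ‖v - w‖ ^ 2 * (sin θ ^ 2 + cos θ ^ 2 + 1) * sin_sq_add_cos_sq θ

lemma norm_postVel_sq_add_norm_postVelStar_sq {σ : E} (hσ : ‖σ‖ = 1) (horth : ⟪v - w, σ⟫ = 0)
    (θ : ℝ) : ‖postVel v w θ σ‖ ^ 2 + ‖postVelStar v w θ σ‖ ^ 2 = ‖v‖ ^ 2 + ‖w‖ ^ 2 := by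
  have hpost := parallelogram_law_with_norm ℝ (postVel v w θ σ) (postVelStar v w θ σ)
  have hpre := parallelogram_law_with_norm ℝ v w
  rw [postVel_add_postVelStar] at hpost
  linarith [norm_postVel_sub_postVelStar_sq hσ horth θ]

variable (E) in
/-- The inner product as a bilinear form, the Hessian of `‖u‖² / 2`. The type of `innerSL ℝ` is
conjugate-linear in its first argument and therefore does not add up with that of a Hessian. -/
def innerForm : E →L[ℝ] E →L[ℝ] ℝ :=
  innerSL ℝ

lemma innerForm_apply (x y : E) : innerForm E x y = ⟪x, y⟫ :=
  rfl

lemma hasFDerivAt_sub_const_mul_norm_sq {ψ : E → ℝ} {ψ' : E →L[ℝ] ℝ} {u : E}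
    (hψ : HasFDerivAt ψ ψ' u) (l : ℝ) :
    HasFDerivAt (fun u => ψ u - l / 2 * ‖u‖ ^ 2) (ψ' - l • innerForm E u) u := by
  refine (hψ.sub ((hasStrictFDerivAt_norm_sq u).hasFDerivAt.const_mul (l / 2))).congr_fderiv ?_
  ext y
  simp only [_root_.sub_apply, _root_.smul_apply, coe_innerSL_apply, nsmul_eq_mul, Nat.cast_ofNat,
    smul_eq_mul, innerForm_apply, sub_right_inj]
  ring

lemma hasHessianBoundOn_sub_const_mul_norm_sq {ψ : E → ℝ} (hψ : Differentiable ℝ ψ)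
    (hψ' : Differentiable ℝ (fderiv ℝ ψ)) {s : Set E} {l M : ℝ}
    (hM : ∀ u ∈ s, ‖fderiv ℝ (fderiv ℝ ψ) u - l • innerForm E‖ ≤ M) :
    HasHessianBoundOn (fun u => ψ u - l / 2 * ‖u‖ ^ 2) s M :=
  ⟨fun u => fderiv ℝ ψ u - l • innerForm E u, fun u => fderiv ℝ (fderiv ℝ ψ) u - l • innerForm E,
    fun u hu => ⟨(hasFDerivAt_sub_const_mul_norm_sq (hψ u).hasFDerivAt l).hasFDerivWithinAt,
      ((hψ' u).hasFDerivAt.sub ((innerForm E).hasFDerivAt.const_smul l)).hasFDerivWithinAt,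
      hM u hu⟩⟩

theorem abs_integral_collision_le {ψ : E → ℝ} (hψ : Differentiable ℝ ψ)
    (hψ' : Differentiable ℝ (fderiv ℝ ψ)) (he₁ : ‖e₁‖ = 1) (he₂ : ‖e₂‖ = 1) (he₁₂ : ⟪e₁, e₂⟫ = 0)
    (hne₁ : ⟪v - w, e₁⟫ = 0) (hne₂ : ⟪v - w, e₂⟫ = 0) (θ : ℝ) {l M : ℝ}
    (hM : ∀ u, ‖u‖ ≤ √(‖v‖ ^ 2 + ‖w‖ ^ 2) →
      ‖fderiv ℝ (fderiv ℝ ψ) u - l • innerForm E‖ ≤ M) :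
    |∫ φ in (0 : ℝ)..2 * π, (ψ (postVel v w θ (greatCircle e₁ e₂ φ)) +
        ψ (postVelStar v w θ (greatCircle e₁ e₂ φ)) - ψ v - ψ w)| ≤
      4 * π * M * ‖v - w‖ ^ 2 * sin θ ^ 2 * cos θ ^ 2 := by
  set f : E → ℝ := fun u => ψ u - l / 2 * ‖u‖ ^ 2 with hf
  set s := Metric.closedBall (0 : E) √(‖v‖ ^ 2 + ‖w‖ ^ 2)
  have hσ := norm_greatCircle he₁ he₂ he₁₂
  have henergy := fun φ => norm_postVel_sq_add_norm_postVelStar_sq (hσ φ)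
    (inner_greatCircle_eq_zero hne₁ hne₂ φ) θ
  have hmem : ∀ x y : E, ‖x‖ ^ 2 + ‖y‖ ^ 2 = ‖v‖ ^ 2 + ‖w‖ ^ 2 → x ∈ s ∧ y ∈ s :=
    fun x y hxy => ⟨mem_closedBall_zero_iff.2 (le_sqrt_of_sq_le (by linarith [sq_nonneg ‖y‖])),
      mem_closedBall_zero_iff.2 (le_sqrt_of_sq_le (by linarith [sq_nonneg ‖x‖]))⟩
  have hinvariant : ∀ φ, ψ (postVel v w θ (greatCircle e₁ e₂ φ)) +
      ψ (postVelStar v w θ (greatCircle e₁ e₂ φ)) - ψ v - ψ w =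
      f (postVel v w θ (greatCircle e₁ e₂ φ)) +
        f (postVelStar v w θ (greatCircle e₁ e₂ φ)) - f v - f w := fun φ => by
    simp only [hf]
    linear_combination l / 2 * henergy φ
  simp only [hinvariant, ← norm_eq_abs]
  exact norm_integral_collision_le (convex_closedBall _ _)
    (hasHessianBoundOn_sub_const_mul_norm_sq hψ hψ' fun u hu => hM u (mem_closedBall_zero_iff.1 hu))
    hσ (hmem v w rfl).1 (hmem v w rfl).2 (fun φ => (hmem _ _ (henergy φ)).1)
    (fun φ => (hmem _ _ (henergy φ)).2)

lemma opNorm_le_sqrt_sum_sq {ι : Type*} [Fintype ι] (b : OrthonormalBasis ι ℝ E)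
    (H : E →L[ℝ] E →L[ℝ] ℝ) : ‖H‖ ≤ √(∑ i, ∑ j, H (b i) (b j) ^ 2) := by
  refine H.opNorm_le_bound₂ (sqrt_nonneg _) fun x y => ?_
  have hexpand : H x y = ∑ i, ∑ j, H (b i) (b j) * (⟪b i, x⟫ * ⟪b j, y⟫) := by
    conv_lhs => rw [← b.sum_repr' x, ← b.sum_repr' y]
    simp only [map_sum, map_smul, _root_.sum_apply, _root_.smul_apply, smul_eq_mul,
      Finset.mul_sum]
    rw [Finset.sum_comm]
    exact Finset.sum_congr rfl fun i _ => Finset.sum_congr rfl fun j _ => by ring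
  have hnorm : ∑ i, ∑ j, (⟪b i, x⟫ * ⟪b j, y⟫) ^ 2 = (‖x‖ * ‖y‖) ^ 2 := by
    simp only [mul_pow, ← Finset.sum_mul_sum, b.sum_sq_inner_right]
  have hcauchy := Finset.sum_mul_sq_le_sq_mul_sq (Finset.univ : Finset (ι × ι))
    (fun k => H (b k.1) (b k.2)) (fun k => ⟪b k.1, x⟫ * ⟪b k.2, y⟫)
  simp only [Fintype.sum_prod_type] at hcauchy
  rw [hnorm, ← hexpand] at hcauchy
  rw [mul_assoc]
  refine abs_le_of_sq_le_sq ?_ (by positivity)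
  rwa [mul_pow, sq_sqrt (by positivity)]

end InnerProductSpace

section Hessian

variable {ψ : E3 → ℝ}

lemma frobNorm_nonneg (A : Matrix (Fin 3) (Fin 3) ℝ) : 0 ≤ frobNorm A :=
  sqrt_nonneg _

lemma frobNorm_le_of_abs_le {A : Matrix (Fin 3) (Fin 3) ℝ} {C : ℝ} (hA : ∀ i j, |A i j| ≤ C) :
    frobNorm A ≤ 3 * C := by
  have hC : 0 ≤ C := (abs_nonneg _).trans (hA 0 0)
  refine sqrt_le_iff.2 ⟨by positivity, ?_⟩
  calc ∑ i, ∑ j, A i j ^ 2 ≤ ∑ _i : Fin 3, ∑ _j : Fin 3, C ^ 2 :=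
        Finset.sum_le_sum fun i _ => Finset.sum_le_sum fun j _ =>
          sq_le_sq.2 ((hA i j).trans (le_abs_self C))
    _ = (3 * C) ^ 2 := by simp only [Finset.sum_const, Finset.card_univ, Fintype.card_fin]; ring

lemma norm_fderiv_fderiv_sub_le_frobNorm (ψ : E3 → ℝ) (l : ℝ) (u : E3) :
    ‖fderiv ℝ (fderiv ℝ ψ) u - l • innerForm E3‖ ≤
      frobNorm (hessMat ψ u - l • (1 : Matrix (Fin 3) (Fin 3) ℝ)) := by
  have hentry : ∀ i j, (fderiv ℝ (fderiv ℝ ψ) u - l • innerForm E3)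
      (EuclideanSpace.single i 1) (EuclideanSpace.single j 1) =
      (hessMat ψ u - l • (1 : Matrix (Fin 3) (Fin 3) ℝ)) i j := fun i j => by
    simp [hessMat, iteratedFDeriv_two_apply, innerForm_apply, Matrix.one_apply,
      EuclideanSpace.inner_single_left]
  simpa only [frobNorm, EuclideanSpace.basisFun_apply, hentry] using opNorm_le_sqrt_sum_sq
    (EuclideanSpace.basisFun (Fin 3) ℝ) (fderiv ℝ (fderiv ℝ ψ) u - l • innerForm E3)

lemma abs_hessMat_apply_le (ψ : E3 → ℝ) (u : E3) (i j : Fin 3) :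
    |hessMat ψ u i j| ≤ ‖iteratedFDeriv ℝ 2 ψ u‖ := by
  simpa [hessMat, Fin.prod_univ_two] using (iteratedFDeriv ℝ 2 ψ u).le_opNorm
    ![EuclideanSpace.single i (1 : ℝ), EuclideanSpace.single j (1 : ℝ)]

lemma exists_frobNorm_hessMat_sub_le (hbd : ∃ C : ℝ, ∀ u, ‖iteratedFDeriv ℝ 2 ψ u‖ ≤ C) (l : ℝ) :
    ∃ K, ∀ u, frobNorm (hessMat ψ u - l • (1 : Matrix (Fin 3) (Fin 3) ℝ)) ≤ K := by
  obtain ⟨C, hC⟩ := hbd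
  refine ⟨3 * (C + |l|), fun u => frobNorm_le_of_abs_le fun i j => ?_⟩
  have hone : |l * (1 : Matrix (Fin 3) (Fin 3) ℝ) i j| ≤ |l| := by
    rw [Matrix.one_apply]
    split_ifs <;> simp
  exact (abs_sub _ _).trans (add_le_add ((abs_hessMat_apply_le ψ u i j).trans (hC u)) hone)

lemma frobNorm_hessMat_le_hessSupNorm (hbd : ∃ C : ℝ, ∀ u, ‖iteratedFDeriv ℝ 2 ψ u‖ ≤ C)
    (u : E3) : frobNorm (hessMat ψ u) ≤ hessSupNorm ψ := by
  obtain ⟨K, hK⟩ := exists_frobNorm_hessMat_sub_le hbd 0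
  simp only [zero_smul, sub_zero] at hK
  exact le_ciSup (f := fun u => frobNorm (hessMat ψ u)) ⟨K, Set.forall_mem_range.2 hK⟩ u

/-- The mean eigenvalue `(1/3) Tr(D²ψ(0))` of `D²ψ(0)`, the multiple of the identity that is
subtracted from the Hessian in `‖D²ψ‖_*`. -/
def meanHessEigenvalue (ψ : E3 → ℝ) : ℝ :=
  (1 / 3) * Matrix.trace (hessMat ψ 0)

/-- The supremum of `|D²ψ - (1/3) Tr(D²ψ(0)) I|` over the closed ball of radius `R`, the inner
supremum of `‖D²ψ‖_*`. -/
def hessDeviation (ψ : E3 → ℝ) (R : ℝ) : ℝ :=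
  ⨆ u : {u : E3 // ‖u‖ ≤ R},
    frobNorm (hessMat ψ u - meanHessEigenvalue ψ • (1 : Matrix (Fin 3) (Fin 3) ℝ))

lemma frobNorm_hessMat_sub_le_hessDeviation
    (hbd : ∃ C : ℝ, ∀ u, ‖iteratedFDeriv ℝ 2 ψ u‖ ≤ C) {R : ℝ} {u : E3} (hu : ‖u‖ ≤ R) :
    frobNorm (hessMat ψ u - meanHessEigenvalue ψ • (1 : Matrix (Fin 3) (Fin 3) ℝ)) ≤
      hessDeviation ψ R := by
  obtain ⟨K, hK⟩ := exists_frobNorm_hessMat_sub_le hbd (meanHessEigenvalue ψ)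
  exact le_ciSup (f := fun u : {u : E3 // ‖u‖ ≤ R} =>
      frobNorm (hessMat ψ u - meanHessEigenvalue ψ • (1 : Matrix (Fin 3) (Fin 3) ℝ)))
    ⟨K, Set.forall_mem_range.2 fun u => hK u⟩ ⟨u, hu⟩

lemma weight_mul_hessDeviation_le_hessStarNorm
    (hbd : ∃ C : ℝ, ∀ u, ‖iteratedFDeriv ℝ 2 ψ u‖ ≤ C) (v w : E3) :
    (1 + ‖v‖ ^ 2 + ‖w‖ ^ 2) ^ (-(1 / 4 : ℝ)) * hessDeviation ψ √(‖v‖ ^ 2 + ‖w‖ ^ 2) ≤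
      hessStarNorm ψ := by
  obtain ⟨K, hK⟩ := exists_frobNorm_hessMat_sub_le hbd (meanHessEigenvalue ψ)
  have hK_nonneg : 0 ≤ K := (frobNorm_nonneg _).trans (hK 0)
  refine le_ciSup (f := fun p : E3 × E3 => (1 + ‖p.1‖ ^ 2 + ‖p.2‖ ^ 2) ^ (-(1 / 4 : ℝ)) *
    hessDeviation ψ √(‖p.1‖ ^ 2 + ‖p.2‖ ^ 2)) ⟨K, Set.forall_mem_range.2 fun p => ?_⟩ (v, w)
  have hweight : (1 + ‖p.1‖ ^ 2 + ‖p.2‖ ^ 2) ^ (-(1 / 4 : ℝ)) ≤ 1 :=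
    rpow_le_one_of_one_le_of_nonpos (by nlinarith [sq_nonneg ‖p.1‖, sq_nonneg ‖p.2‖]) (by norm_num)
  have hdev : hessDeviation ψ √(‖p.1‖ ^ 2 + ‖p.2‖ ^ 2) ≤ K :=
    Real.iSup_le (fun u => hK u) hK_nonneg
  calc (1 + ‖p.1‖ ^ 2 + ‖p.2‖ ^ 2) ^ (-(1 / 4 : ℝ)) * hessDeviation ψ √(‖p.1‖ ^ 2 + ‖p.2‖ ^ 2)
      ≤ (1 + ‖p.1‖ ^ 2 + ‖p.2‖ ^ 2) ^ (-(1 / 4 : ℝ)) * K := by gcongr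
    _ ≤ K := mul_le_of_le_one_left hK_nonneg hweight

lemma hessDeviation_le_hessStarNorm_mul
    (hbd : ∃ C : ℝ, ∀ u, ‖iteratedFDeriv ℝ 2 ψ u‖ ≤ C) (v w : E3) :
    hessDeviation ψ √(‖v‖ ^ 2 + ‖w‖ ^ 2) ≤
      hessStarNorm ψ * (1 + ‖v‖ ^ 2 + ‖w‖ ^ 2) ^ (1 / 4 : ℝ) := by
  have hpos : 0 < 1 + ‖v‖ ^ 2 + ‖w‖ ^ 2 := by positivity
  have h := weight_mul_hessDeviation_le_hessStarNorm hbd v w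
  rwa [rpow_neg hpos.le, inv_mul_le_iff₀' (rpow_pos_of_pos hpos _)] at h

lemma exists_norm_fderiv_fderiv_sub_le_Cstar
    (hbd : ∃ C : ℝ, ∀ u, ‖iteratedFDeriv ℝ 2 ψ u‖ ≤ C) (v w : E3) :
    ∃ l : ℝ, ∀ u, ‖u‖ ≤ √(‖v‖ ^ 2 + ‖w‖ ^ 2) →
      ‖fderiv ℝ (fderiv ℝ ψ) u - l • innerForm E3‖ ≤ Cstar ψ v w := by
  rcases min_choice (hessSupNorm ψ) (hessStarNorm ψ * (1 + ‖v‖ ^ 2 + ‖w‖ ^ 2) ^ (1 / 4 : ℝ))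
    with hmin | hmin <;> rw [Cstar, hmin]
  · refine ⟨0, fun u _ => (norm_fderiv_fderiv_sub_le_frobNorm ψ 0 u).trans ?_⟩
    simpa only [zero_smul, sub_zero] using frobNorm_hessMat_le_hessSupNorm hbd u
  · exact ⟨meanHessEigenvalue ψ, fun u hu => (norm_fderiv_fderiv_sub_le_frobNorm ψ _ u).trans
      ((frobNorm_hessMat_sub_le_hessDeviation hbd hu).trans
        (hessDeviation_le_hessStarNorm_mul hbd v w))⟩

lemma Cstar_nonneg (ψ : E3 → ℝ) (v w : E3) : 0 ≤ Cstar ψ v w := by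
  have hsup : 0 ≤ hessSupNorm ψ := Real.iSup_nonneg fun u => frobNorm_nonneg _
  have hstar : 0 ≤ hessStarNorm ψ := Real.iSup_nonneg fun p =>
    mul_nonneg (by positivity) (Real.iSup_nonneg fun u => frobNorm_nonneg _)
  exact le_min hsup (mul_nonneg hstar (by positivity))

end Hessian

theorem stmt1_general {ψ : E3 → ℝ} (hψ : Differentiable ℝ ψ) (hψ' : Differentiable ℝ (fderiv ℝ ψ))
    (hbd : ∃ C : ℝ, ∀ u, ‖iteratedFDeriv ℝ 2 ψ u‖ ≤ C) {v w e₁ e₂ : E3} (he₁ : ‖e₁‖ = 1)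
    (he₂ : ‖e₂‖ = 1) (he₁₂ : ⟪e₁, e₂⟫ = 0) (hne₁ : ⟪v - w, e₁⟫ = 0) (hne₂ : ⟪v - w, e₂⟫ = 0)
    (θ : ℝ) :
    |∫ φ in (0 : ℝ)..2 * π, (ψ (postVel v w θ (greatCircle e₁ e₂ φ)) +
        ψ (postVelStar v w θ (greatCircle e₁ e₂ φ)) - ψ v - ψ w)| ≤
      4 * π * Cstar ψ v w * ‖v - w‖ ^ 2 * sin θ ^ 2 * cos θ ^ 2 := by
  obtain ⟨l, hl⟩ := exists_norm_fderiv_fderiv_sub_le_Cstar hbd v w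
  exact abs_integral_collision_le hψ hψ' he₁ he₂ he₁₂ hne₁ hne₂ θ hl

/-- For `ψ ∈ C²_b(ℝ³)`, `v ≠ v_*`, `θ ∈ [0,π]` and `e₁, e₂` orthonormal
vectors perpendicular to `n = (v-v_*)/|v-v_*|`, the integral over the great circle
`σ(φ) = cos φ e₁ + sin φ e₂` of `Δψ` is bounded by
`8π C*_ψ(v,v_*) |v-v_*|² sin²θ cos²θ`. -/
theorem stmt1 (ψ : E3 → ℝ) (hψ : ContDiff ℝ 2 ψ)
    (hbd : ∀ i : ℕ, i ≤ 2 → ∃ C : ℝ, ∀ u : E3, ‖iteratedFDeriv ℝ i ψ u‖ ≤ C)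
    (v w : E3) (hvw : v ≠ w) (θ : ℝ) (hθ : θ ∈ Set.Icc 0 π)
    (e₁ e₂ : E3) (he₁ : ‖e₁‖ = 1) (he₂ : ‖e₂‖ = 1) (he₁₂ : ⟪e₁, e₂⟫ = 0)
    (hne₁ : ⟪v - w, e₁⟫ = 0) (hne₂ : ⟪v - w, e₂⟫ = 0) :
    |∫ φ in (0 : ℝ)..(2 * π),
        (ψ (Real.sin θ ^ 2 • v + Real.cos θ ^ 2 • w -
              (‖v - w‖ * Real.cos θ * Real.sin θ) • (Real.cos φ • e₁ + Real.sin φ • e₂)) +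
         ψ (Real.cos θ ^ 2 • v + Real.sin θ ^ 2 • w +
              (‖v - w‖ * Real.cos θ * Real.sin θ) • (Real.cos φ • e₁ + Real.sin φ • e₂)) -
         ψ v - ψ w)| ≤
      8 * π * Cstar ψ v w * ‖v - w‖ ^ 2 * Real.sin θ ^ 2 * Real.cos θ ^ 2 := by
  refine (stmt1_general (hψ.differentiable two_ne_zero)
    ((hψ.fderiv_right (m := 1) le_rfl).differentiable one_ne_zero) (hbd 2 le_rfl) he₁ he₂ he₁₂ hne₁
    hne₂ θ).trans ?_
  have := Cstar_nonneg ψ v w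
  gcongr
  norm_num

end
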